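/- Let f : 𝒜 → 𝒜 satisfy f(A + B·P) ≡ f(A) (mod P) for every A, B ∈ 𝒜 and every irreducible P ∈ 𝒫, and suppose that deg(f(A)) < q^{deg(A)} / (27·q·deg(A)) whenever deg(A) is sufficiently large. Then f is a polynomial map. -/

import Mathlib

open Polynomial

/-!
The map `f` is algebraic, hence grows at most linearly, hence is polynomial.

*Algebraicity.* Linear algebra over `F` yields a nonzero `Q(X, Y)` over `F[t]` whose degrees and
whose coefficients' degrees are bounded by a box, with `Q(A, f A) = 0` for all `A` of degree less
than a large `n`; the constant `27 q` leaves room for one third of `q ^ n` for each of the three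
sides of the box. The map `A ↦ Q(A, f A)` inherits the congruences of `f`. If it vanishes in
degrees below `m`, then its value at `A` of degree `m` is divisible by all primes of degree
at most `m`, hence by `t ^ q ^ m - t`, whose degree it does not reach; so it vanishes everywhere.

*Linear growth.* The root `f A` of `Q(A, Y)` has degree at most that of the coefficients.

*Polynomiality.* If `f` has growth slope `c`, subtract from a multiple of `f` an interpolation
polynomial at `c + 1` points `a`. The difference `h` vanishes at these points, so `h A` is divisible
by every prime factor of every `A - a`. Mason's trick, `A - a ∣ h A * (A - a)'`, applied to `A` of
large degree with a fixed derivative, makes `h A` divisible by essentially `∏ (A - a)`, which has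
too large a degree. Thus `h A = 0` for such `A`, and then `A - B ∣ h B * (A - B)'` forces `h B = 0`.
-/

open Filter

open scoped Polynomial.Bivariate

section Divisibility

theorem dvd_mul_derivative_of_forall_irreducible_dvd {F : Type*} [Field F] {R h : F[X]}
    (H : ∀ P, Irreducible P → P ∣ R → P ∣ h) : R ∣ h * derivative R := by
  classical
  have hrad : UniqueFactorizationMonoid.radical R ∣ h :=
    Finset.prod_dvd_of_isRelPrime UniqueFactorizationMonoid.pairwise_primeFactors_isRelPrime
      fun P hP ↦ by
        rw [UniqueFactorizationMonoid.mem_primeFactors] at hP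
        exact H P (UniqueFactorizationMonoid.irreducible_of_normalized_factor P hP)
          (UniqueFactorizationMonoid.dvd_of_mem_normalizedFactors hP)
  simpa only [EuclideanDomain.radical_mul_divRadical]
    using mul_dvd_mul hrad (divRadical_dvd_derivative R)

theorem X_pow_card_pow_sub_X_dvd {F : Type*} [Field F] [Fintype F] {n : ℕ} (hn : n ≠ 0) {h : F[X]}
    (H : ∀ P, Irreducible P → P.natDegree ≤ n → P ∣ h) : X ^ Fintype.card F ^ n - X ∣ h := by
  have hder : derivative (X ^ Fintype.card F ^ n - X : F[X]) = -1 := by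
    simp [derivative_X_pow, hn]
  have hdvd : X ^ Fintype.card F ^ n - X ∣ h * derivative (X ^ Fintype.card F ^ n - X) := by
    refine dvd_mul_derivative_of_forall_irreducible_dvd fun P hP hPdvd ↦ H P hP ?_
    rw [← Nat.card_eq_fintype_card] at hPdvd
    exact Nat.le_of_dvd (Nat.pos_of_ne_zero hn)
      (hP.natDegree_dvd_of_dvd_X_pow_card_pow_sub_X hPdvd)
  simpa only [hder, mul_neg, mul_one, dvd_neg] using hdvd

/- The witness is `∏ (b - a)` over pairs of distinct elements of `s`: the factors `x - a` and
`x - b` are coprime up to `b - a`. -/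
theorem exists_forall_prod_sub_dvd_mul {R : Type*} [CommRing R] [IsDomain R] (s : Finset R) :
    ∃ E ≠ 0, ∀ x y : R, (∀ a ∈ s, x - a ∣ y) → ∏ a ∈ s, (x - a) ∣ y * E := by
  classical
  induction s using Finset.induction_on with
  | empty => exact ⟨1, one_ne_zero, by simp⟩
  | insert b s hb ih =>
    obtain ⟨E, hE, hdvd⟩ := ih
    have hW : ∏ a ∈ s, (b - a) ≠ 0 :=
      Finset.prod_ne_zero_iff.2 fun a ha ↦ sub_ne_zero.2 (ne_of_mem_of_not_mem ha hb).symm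
    refine ⟨E * ∏ a ∈ s, (b - a), mul_ne_zero hE hW, fun x y hy ↦ ?_⟩
    have hb_dvd : x - b ∣ y * E := (hy b (s.mem_insert_self b)).mul_right E
    have hs_dvd : ∏ a ∈ s, (x - a) ∣ y * E :=
      hdvd x y fun a ha ↦ hy a (Finset.mem_insert_of_mem ha)
    obtain ⟨v, hv⟩ : x - b ∣ ∏ a ∈ s, (x - a) - ∏ a ∈ s, (b - a) := by
      simpa only [Lagrange.eval_nodal, id] using sub_dvd_eval_sub x b (Lagrange.nodal s id)
    have hsplit : y * (E * ∏ a ∈ s, (b - a)) =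
        y * E * ∏ a ∈ s, (x - a) - (x - b) * (y * E) * v := by
      linear_combination (-y * E) * hv
    rw [Finset.prod_insert hb, hsplit]
    exact dvd_sub (mul_dvd_mul_right hb_dvd _) ((mul_dvd_mul_left _ hs_dvd).mul_right v)

theorem dvd_evalEval_sub_evalEval {R : Type*} [CommRing R] (Q : R[X][Y]) {P x x' y y' : R}
    (hx : P ∣ x - x') (hy : P ∣ y - y') : P ∣ Q.evalEval x y - Q.evalEval x' y' := by
  have hfst : P ∣ Q.evalEval x y - Q.evalEval x' y := hx.trans (sub_dvd_eval_sub _ _ _)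
  have hsnd : P ∣ Q.evalEval x' y - Q.evalEval x' y' := by
    simp only [← map_evalRingHom_eval]
    exact hy.trans (sub_dvd_eval_sub _ _ _)
  simpa only [sub_add_sub_cancel] using dvd_add hfst hsnd

end Divisibility

section DegreeBounds

theorem natDegree_le_of_degree_lt_add_one {R : Type*} [Semiring R] {p : R[X]} {n : ℕ}
    (h : p.degree < ((n + 1 : ℕ) : WithBot ℕ)) : p.natDegree ≤ n :=
  natDegree_le_of_degree_le (mem_degreeLE.1 (degreeLT_succ_eq_degreeLE (R := R) ▸ mem_degreeLT.2 h))

theorem exists_forall_coeff_le {R : Type*} [Semiring R] (p : R[X]) (φ : R → ℕ) :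
    ∃ N, ∀ i, φ (p.coeff i) ≤ N := by
  refine ⟨φ 0 + p.support.sup fun i ↦ φ (p.coeff i), fun i ↦ ?_⟩
  by_cases hi : i ∈ p.support
  · exact (Finset.le_sup (f := fun i ↦ φ (p.coeff i)) hi).trans (Nat.le_add_left _ _)
  · rw [notMem_support_iff.1 hi]
    exact Nat.le_add_right _ _

theorem natDegree_eval_le {R : Type*} [Semiring R] {p : R[X][Y]} {N : ℕ}
    (hp : ∀ i, (p.coeff i).natDegree ≤ N) (y : R[X]) :
    (p.eval y).natDegree ≤ p.natDegree * y.natDegree + N := by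
  rw [eval_eq_sum, sum_def]
  refine natDegree_sum_le_of_forall_le _ _ fun i hi ↦ ?_
  calc (p.coeff i * y ^ i).natDegree ≤ (p.coeff i).natDegree + (y ^ i).natDegree :=
        natDegree_mul_le
    _ ≤ N + p.natDegree * y.natDegree :=
        add_le_add (hp i) (natDegree_pow_le_of_le i le_rfl |>.trans
          (Nat.mul_le_mul_right _ (le_natDegree_of_mem_supp i hi)))
    _ = p.natDegree * y.natDegree + N := add_comm _ _

theorem natDegree_swap_le {R : Type*} [CommSemiring R] {p : R[X][Y]} {N : ℕ}
    (hp : ∀ i, (p.coeff i).natDegree ≤ N) : (Bivariate.swap p).natDegree ≤ N := by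
  rw [p.as_sum_support, map_sum]
  refine natDegree_sum_le_of_forall_le _ _ fun i _ ↦ ?_
  rw [Bivariate.swap_monomial]
  exact (natDegree_mul_C_le _ _).trans (natDegree_map_le.trans (hp i))

theorem natDegree_le_of_eval_eq_zero {R : Type*} [CommRing R] [IsDomain R] {p : R[X][Y]}
    (hp : p ≠ 0) {y : R[X]} (hy : p.eval y = 0) {N : ℕ} (hN : ∀ i, (p.coeff i).natDegree ≤ N) :
    y.natDegree ≤ N := by
  obtain ⟨r, hr⟩ : Y - C y ∣ p := dvd_iff_isRoot.2 hy
  have hdvd : Bivariate.swap (Y - C y) ∣ Bivariate.swap p := by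
    rw [hr, map_mul]
    exact dvd_mul_right _ _
  -- After exchanging the variables, the degree of the factor `Y - y` is the degree of `y`.
  have hdeg : (Bivariate.swap (Y - C y)).natDegree = y.natDegree := by
    rw [map_sub, Bivariate.swap_Y, Bivariate.swap_C, natDegree_sub, natDegree_sub_C,
      natDegree_map_eq_of_injective C_injective]
  rw [← hdeg]
  exact (natDegree_le_of_dvd hdvd ((map_ne_zero_iff _ (AlgEquiv.injective _)).2 hp)).trans
    (natDegree_swap_le hN)

theorem natDegree_prod_sub {R : Type*} [CommRing R] [IsDomain R] {s : Finset R[X]} {A : R[X]}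
    (hA : ∀ a ∈ s, a.natDegree < A.natDegree) :
    (∏ a ∈ s, (A - a)).natDegree = s.card * A.natDegree := by
  rw [natDegree_prod _ _ fun a ha ↦ sub_ne_zero.2 fun h ↦ (hA a ha).ne (congrArg natDegree h).symm,
    Finset.sum_congr rfl fun a ha ↦ natDegree_sub_eq_left_of_natDegree_lt (hA a ha),
    Finset.sum_const, smul_eq_mul]

end DegreeBounds

section LinearGrowth

/-- The map `f` on polynomials has linear growth of slope at most `c`, up to an additive constant.
Degrees are `natDegree`s, so that values equal to `0` satisfy the bound. -/
def HasLinearGrowth {R : Type*} [Semiring R] (c : ℕ) (f : R[X] → R[X]) : Prop :=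
  ∃ K, ∀ A, (f A).natDegree ≤ c * A.natDegree + K

theorem HasLinearGrowth.const_mul {R : Type*} [Semiring R] {c : ℕ} {f : R[X] → R[X]}
    (hf : HasLinearGrowth c f) (V : R[X]) : HasLinearGrowth c fun A ↦ V * f A := by
  obtain ⟨K, hK⟩ := hf
  refine ⟨V.natDegree + K, fun A ↦ natDegree_mul_le.trans ?_⟩
  linarith [hK A]

theorem HasLinearGrowth.sub {R : Type*} [Ring R] {c : ℕ} {f g : R[X] → R[X]}
    (hf : HasLinearGrowth c f) (hg : HasLinearGrowth c g) :
    HasLinearGrowth c fun A ↦ f A - g A := by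
  obtain ⟨K, hK⟩ := hf
  obtain ⟨L, hL⟩ := hg
  refine ⟨K + L, fun A ↦ (natDegree_sub_le _ _).trans (max_le ?_ ?_)⟩
  · linarith [hK A]
  · linarith [hL A]

theorem hasLinearGrowth_eval {R : Type*} [Semiring R] {c : ℕ} {g : R[X][Y]}
    (hg : g.natDegree ≤ c) : HasLinearGrowth c fun A ↦ g.eval A := by
  obtain ⟨N, hN⟩ := exists_forall_coeff_le g natDegree
  exact ⟨N, fun A ↦ (natDegree_eval_le hN A).trans
    (Nat.add_le_add_right (Nat.mul_le_mul_right _ hg) N)⟩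

theorem exists_forall_natDegree_map_evalRingHom_coeff_le {R : Type*} [CommRing R] (Q : R[X][X][Y]) :
    ∃ c K, ∀ A j, ((Q.map (evalRingHom A)).coeff j).natDegree ≤ c * A.natDegree + K := by
  obtain ⟨c, hc⟩ := exists_forall_coeff_le Q natDegree
  choose K hK using fun p : R[X][Y] ↦ hasLinearGrowth_eval (le_refl p.natDegree)
  obtain ⟨L, hL⟩ := exists_forall_coeff_le Q K
  refine ⟨c, L, fun A j ↦ ?_⟩
  rw [coeff_map, coe_evalRingHom]
  exact (hK _ A).trans (add_le_add (Nat.mul_le_mul_right _ (hc j)) (hL j))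

theorem exists_hasLinearGrowth_of_evalEval_eq_zero {R : Type*} [CommRing R] [IsDomain R]
    {f : R[X] → R[X]} {Q : R[X][X][Y]} (hQ : Q ≠ 0) (hroot : ∀ A, Q.evalEval A (f A) = 0) :
    ∃ c, HasLinearGrowth c f := by
  classical
  obtain ⟨c, K, hcK⟩ := exists_forall_natDegree_map_evalRingHom_coeff_le Q
  set Z := Q.leadingCoeff.roots.toFinset
  refine ⟨c, K + Z.sup fun A ↦ (f A).natDegree, fun A ↦ ?_⟩
  by_cases hA : A ∈ Z
  · have := Finset.le_sup (f := fun A ↦ (f A).natDegree) hA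
    omega
  · have hlead : evalRingHom A Q.leadingCoeff ≠ 0 := fun h ↦
      hA (Multiset.mem_toFinset.2 ((mem_roots (leadingCoeff_ne_zero.2 hQ)).2 h))
    have hQA : Q.map (evalRingHom A) ≠ 0 := fun h ↦
      hlead (by rw [leadingCoeff, ← coeff_map, h, coeff_zero])
    have hfA := natDegree_le_of_eval_eq_zero hQA
      ((map_evalRingHom_eval _ _ _).trans (hroot A)) (hcK A)
    omega

end LinearGrowth

section Siegel

variable {F : Type*} [Field F] {H I J : ℕ}

/-- The polynomial `∑ w (j, i, k) t ^ k X ^ i Y ^ j` over `F[t]` with degree less than `J` in `Y`,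
less than `I` in `X` and less than `H` in `t`, attached to the box `w` of its coefficients. It is
the general shape of the auxiliary polynomial. -/
noncomputable def boxPolynomial (w : Fin J × Fin I × Fin H → F) : F[X][X][Y] :=
  ∑ b, monomial b.1 (monomial b.2.1 (monomial b.2.2 (w b)))

theorem boxPolynomial_ne_zero {w : Fin J × Fin I × Fin H → F} (hw : w ≠ 0) :
    boxPolynomial w ≠ 0 := by
  refine fun h ↦ hw (funext fun b ↦ ?_)
  have hcoeff : (((boxPolynomial w).coeff b.1).coeff b.2.1).coeff b.2.2 = w b := by
    rw [boxPolynomial, finsetSum_coeff, finsetSum_coeff, finsetSum_coeff, Finset.sum_eq_single b]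
    · simp only [coeff_monomial_same]
    · intro b' _ hb'
      rw [coeff_monomial]
      split_ifs with hj
      · rw [coeff_monomial]
        split_ifs with hi
        · exact coeff_monomial_of_ne _ fun hk ↦
            hb' (Prod.ext (Fin.ext hj) (Prod.ext (Fin.ext hi) (Fin.ext hk.symm)))
        · exact coeff_zero _
      · simp only [coeff_zero]
    · simp
  simpa only [h, coeff_zero, Pi.zero_apply] using hcoeff.symm

theorem evalEval_boxPolynomial (w : Fin J × Fin I × Fin H → F) (x y : F[X]) :
    (boxPolynomial w).evalEval x y =
      ∑ b, w b • (X ^ (b.2.2 : ℕ) * x ^ (b.2.1 : ℕ) * y ^ (b.1 : ℕ)) := by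
  simp only [boxPolynomial, evalEval_finsetSum]
  refine Finset.sum_congr rfl fun b _ ↦ ?_
  simp [evalEval, ← C_mul_X_pow_eq_monomial, smul_eq_C_mul, mul_assoc]

theorem natDegree_evalEval_boxPolynomial_lt (hH : 0 < H) (w : Fin J × Fin I × Fin H → F)
    (x y : F[X]) :
    ((boxPolynomial w).evalEval x y).natDegree < H + I * x.natDegree + J * y.natDegree := by
  have hle : ((boxPolynomial w).evalEval x y).natDegree ≤
      (H - 1) + I * x.natDegree + J * y.natDegree := by
    rw [evalEval_boxPolynomial]
    refine natDegree_sum_le_of_forall_le _ _ fun b _ ↦ (natDegree_smul_le _ _).trans ?_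
    refine natDegree_mul_le_of_le (natDegree_mul_le_of_le ?_ ?_) ?_
    · rw [natDegree_X_pow]
      omega
    · exact natDegree_pow_le.trans (Nat.mul_le_mul_right _ b.2.1.2.le)
    · exact natDegree_pow_le.trans (Nat.mul_le_mul_right _ b.1.2.le)
  omega

theorem exists_boxPolynomial_evalEval_eq_zero {ι : Type*} [Fintype ι] (x y : ι → F[X]) {E : ℕ}
    (hcard : Fintype.card ι * E < J * I * H)
    (hE : ∀ v, H + I * (x v).natDegree + J * (y v).natDegree ≤ E) :
    ∃ w : Fin J × Fin I × Fin H → F, w ≠ 0 ∧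
      ∀ v, (boxPolynomial w).evalEval (x v) (y v) = 0 := by
  -- `L w` lists the coefficients of the values `Q (x v, y v)` in degrees less than `E`.
  let L : (Fin J × Fin I × Fin H → F) →ₗ[F] ι × Fin E → F :=
    Fintype.linearCombination F fun b u ↦
      (X ^ (b.2.2 : ℕ) * x u.1 ^ (b.2.1 : ℕ) * y u.1 ^ (b.1 : ℕ)).coeff u.2
  have hL : ∀ w v k, L w (v, k) = ((boxPolynomial w).evalEval (x v) (y v)).coeff k := by
    intro w v k
    simp [L, Fintype.linearCombination_apply, evalEval_boxPolynomial, finsetSum_coeff]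
  have hker : LinearMap.ker L ≠ ⊥ := by
    refine LinearMap.ker_ne_bot_of_finrank_lt ?_
    simpa [← mul_assoc] using hcard
  obtain ⟨w, hwL, hw⟩ := (Submodule.ne_bot_iff _).1 hker
  refine ⟨w, hw, fun v ↦ ?_⟩
  have hH : 0 < H := Nat.pos_of_ne_zero fun h ↦ by simp [h] at hcard
  have hdeg := (natDegree_evalEval_boxPolynomial_lt hH w (x v) (y v)).trans_le (hE v)
  ext k
  rcases lt_or_ge k E with hk | hk
  · simpa [LinearMap.mem_ker.1 hwL] using (hL w v ⟨k, hk⟩).symm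
  · rw [coeff_eq_zero_of_natDegree_lt (hdeg.trans_le hk), coeff_zero]

end Siegel

section ExponentialBounds

theorem mul_pow_le_mul_pow {q d n : ℕ} (hq : 2 ≤ q) (hd : 1 ≤ d) (hdn : d ≤ n) :
    n * q ^ d ≤ d * q ^ n := by
  induction n, hdn using Nat.le_induction with
  | base => rfl
  | succ n hn ih =>
    calc (n + 1) * q ^ d ≤ 2 * n * q ^ d := Nat.mul_le_mul_right _ (by omega)
      _ = 2 * (n * q ^ d) := by ring
      _ ≤ q * (d * q ^ n) := Nat.mul_le_mul hq ih
      _ = d * q ^ (n + 1) := by ring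

theorem eventually_mul_le_pow {q : ℕ} (hq : 2 ≤ q) (c : ℕ) : ∀ᶠ n : ℕ in atTop, c * n ≤ q ^ n := by
  have hlittle := (isLittleO_coe_const_pow_of_one_lt (R := ℝ)
    (show (1 : ℝ) < q by exact_mod_cast hq)).const_mul_left c
  filter_upwards [hlittle.bound one_pos] with n hn
  rw [one_mul, Real.norm_of_nonneg (by positivity), Real.norm_of_nonneg (by positivity)] at hn
  exact_mod_cast hn

theorem finite_setOf_natDegree_le (F : Type*) [Semiring F] [Finite F] (N : ℕ) :
    {A : F[X] | A.natDegree ≤ N}.Finite := by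
  have : Finite (degreeLT F (N + 1)) := Finite.of_equiv _ (degreeLTEquiv F (N + 1)).toEquiv.symm
  refine (Set.toFinite (degreeLT F (N + 1) : Set F[X])).subset fun A hA ↦ mem_degreeLT.2 ?_
  exact degree_le_natDegree.trans_lt (by exact_mod_cast Nat.lt_succ_of_le hA)

theorem eventually_forall_mul_natDegree_le_pow {F : Type*} [Semiring F] [Finite F] {q κ : ℕ}
    (hq : 2 ≤ q) {f : F[X] → F[X]} {N : ℕ}
    (hf : ∀ A, N ≤ A.natDegree → κ * A.natDegree * (f A).natDegree ≤ q ^ A.natDegree) :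
    ∀ᶠ n in atTop, ∀ A, A.natDegree ≤ n → κ * n * (f A).natDegree ≤ q ^ n := by
  obtain ⟨c, hc⟩ := ((finite_setOf_natDegree_le F N).image fun A ↦ (f A).natDegree).bddAbove
  filter_upwards [eventually_mul_le_pow hq (κ * c)] with n hn A hAn
  rcases le_or_gt A.natDegree N with hA | hA
  · calc κ * n * (f A).natDegree ≤ κ * n * c := Nat.mul_le_mul_left _ (hc ⟨A, hA, rfl⟩)
      _ = κ * c * n := by ring
      _ ≤ q ^ n := hn
  · have hApos : 0 < A.natDegree := by omega
    refine Nat.le_of_mul_le_mul_left ?_ hApos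
    calc A.natDegree * (κ * n * (f A).natDegree)
        = n * (κ * A.natDegree * (f A).natDegree) := by ring
      _ ≤ n * q ^ A.natDegree := Nat.mul_le_mul_left _ (hf A hA.le)
      _ ≤ A.natDegree * q ^ n := mul_pow_le_mul_pow hq hApos hAn

/- The box has sides `J = 9 q n`, `I ≈ q ^ n / 3 n` and `H ≈ q ^ n / 3`, so its volume is about
`q * (q ^ n) ^ 2`; the factor `q ≥ 2` absorbs the rounding. -/
theorem exists_box_volume_gt {q n : ℕ} (hq : 2 ≤ q) (hn : 1 ≤ n) (hqn : 12 * n ≤ q ^ n) :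
    ∃ H I, 3 * H ≤ q ^ n ∧ 3 * n * I ≤ q ^ n ∧ q ^ n * q ^ n < 9 * q * n * I * H := by
  set T := q ^ n
  refine ⟨T / 3, T / (3 * n), Nat.mul_div_le _ _, Nat.mul_div_le _ _, ?_⟩
  have hI : 3 * T ≤ 4 * (3 * n * (T / (3 * n))) := by
    have := Nat.lt_mul_div_succ T (show 0 < 3 * n by omega)
    linarith
  have hH : 3 * T ≤ 4 * (3 * (T / 3)) := by omega
  have hT : 0 < T * T := by
    have : 0 < T := by omega
    positivity
  calc T * T < 2 * (3 * n * (T / (3 * n)) * (3 * (T / 3))) := by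
        nlinarith [Nat.mul_le_mul hI hH]
    _ ≤ q * (3 * n * (T / (3 * n)) * (3 * (T / 3))) := Nat.mul_le_mul_right _ hq
    _ = 9 * q * n * (T / (3 * n)) * (T / 3) := by ring

theorem box_degree_le_pow {q n m H I a b : ℕ} (hq : 2 ≤ q) (hn : 1 ≤ n) (hnm : n ≤ m)
    (hH : 3 * H ≤ q ^ n) (hI : 3 * n * I ≤ q ^ n) (ha : a ≤ m) (hb : 27 * q * m * b ≤ q ^ m) :
    H + I * a + 9 * q * n * b ≤ q ^ m := by
  have hH' : 3 * H ≤ q ^ m := hH.trans (Nat.pow_le_pow_right (by omega) hnm)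
  have hI' : 3 * (I * a) ≤ q ^ m := by
    refine Nat.le_of_mul_le_mul_left ?_ hn
    calc n * (3 * (I * a)) = 3 * n * I * a := by ring
      _ ≤ q ^ n * m := Nat.mul_le_mul hI ha
      _ = m * q ^ n := mul_comm _ _
      _ ≤ n * q ^ m := mul_pow_le_mul_pow hq hn hnm
  have hJ' : 3 * (9 * q * n * b) ≤ q ^ m := by
    calc 3 * (9 * q * n * b) = 27 * q * n * b := by ring
      _ ≤ 27 * q * m * b := by gcongr
      _ ≤ q ^ m := hb
  omega

end ExponentialBounds

section Interpolation

theorem exists_natDegree_le_eval_eq_mul {R : Type*} [CommRing R] [IsDomain R] {s : Finset R}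
    {c : ℕ} (hs : s.card = c + 1) (f : R → R) :
    ∃ V ≠ 0, ∃ g : R[X], g.natDegree ≤ c ∧ ∀ a ∈ s, g.eval a = V * f a := by
  classical
  let i := algebraMap R (FractionRing R)
  have hi : Function.Injective i := IsFractionRing.injective R (FractionRing R)
  let G := Lagrange.interpolate s i fun a ↦ i (f a)
  obtain ⟨V, hV, hVG⟩ := IsLocalization.integerNormalization_spec (nonZeroDivisors R) G
  refine ⟨V, nonZeroDivisors.ne_zero hV, IsLocalization.integerNormalization (nonZeroDivisors R) G,
    ?_, fun a ha ↦ hi ?_⟩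
  · have hG : G.degree < (c + 1 : ℕ) := hs ▸ Lagrange.degree_interpolate_lt _ hi.injOn
    exact (natDegree_le_natDegree (degree_mono
      (IsLocalization.integerNormalization_support _ G))).trans
      (natDegree_le_of_degree_lt_add_one hG)
  · rw [← eval_map_apply, hVG, eval_smul, Lagrange.eval_interpolate_at_node _ hi.injOn ha, map_mul,
      Algebra.smul_def]

theorem exists_eval_algebraMap_eq {R : Type*} (K : Type*) [CommRing R] [Field K] [Algebra R K]
    [FaithfulSMul R K] {f : R → R} {V : R} (hV : V ≠ 0) {g : R[X]}
    (hg : ∀ a, g.eval a = V * f a) :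
    ∃ G : K[X], ∀ a, G.eval (algebraMap R K a) = algebraMap R K (f a) := by
  have hV' : algebraMap R K V ≠ 0 := by
    simpa using hV
  refine ⟨C (algebraMap R K V)⁻¹ * g.map (algebraMap R K), fun a ↦ ?_⟩
  rw [eval_mul, eval_C, eval_map_apply, hg, map_mul, inv_mul_cancel_left₀ hV']

end Interpolation

/-- A primary pseudo-polynomial: a self-map of a commutative ring which induces a map on residues
modulo each irreducible element. -/
def IsPrimaryPseudopolynomial {R : Type*} [CommRing R] (f : R → R) : Prop :=
  ∀ ⦃P⦄, Irreducible P → ∀ ⦃A B⦄, P ∣ A - B → P ∣ f A - f B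

namespace IsPrimaryPseudopolynomial

theorem evalEval {R : Type*} [CommRing R] {f : R → R} (hf : IsPrimaryPseudopolynomial f)
    (Q : R[X][Y]) : IsPrimaryPseudopolynomial fun A ↦ Q.evalEval A (f A) :=
  fun _ hP _ _ hAB ↦ dvd_evalEval_sub_evalEval Q hAB (hf hP hAB)

section FiniteField

variable {F : Type*} [Field F] [Fintype F]

theorem eq_zero_of_degree_lt {h : F[X] → F[X]} (hh : IsPrimaryPseudopolynomial h) {n : ℕ}
    (hn : n ≠ 0) (hzero : ∀ A, A.degree < (n : WithBot ℕ) → h A = 0)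
    (hdeg : ∀ m ≥ n, ∀ A, A.natDegree ≤ m → (h A).natDegree < Fintype.card F ^ m) (A : F[X]) :
    h A = 0 := by
  suffices hlt : ∀ m ≥ n, ∀ A, A.degree < (m : WithBot ℕ) → h A = 0 from
    hlt (n + A.natDegree + 1) (by omega) A
      (degree_le_natDegree.trans_lt (by exact_mod_cast (by omega)))
  intro m hm
  induction m, hm using Nat.le_induction with
  | base => exact hzero
  | succ m hm ih =>
    intro A hA
    have hdvd : ∀ P, Irreducible P → P.natDegree ≤ m → P ∣ h A := by
      intro P hP hPm
      have hmod : h (A % P) = 0 :=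
        ih _ ((degree_mod_lt A hP.ne_zero).trans_le (degree_le_of_natDegree_le hPm))
      have hsub : P ∣ A - A % P :=
        ⟨A / P, by rw [EuclideanDomain.mod_eq_sub_mul_div, sub_sub_cancel]⟩
      simpa only [hmod, sub_zero] using hh hP hsub
    have hlt := hdeg m hm A (natDegree_le_of_degree_lt_add_one hA)
    by_contra hne
    have hle := natDegree_le_of_dvd (X_pow_card_pow_sub_X_dvd (by omega) hdvd) hne
    rw [FiniteField.X_pow_card_pow_sub_X_natDegree_eq F (by omega) Fintype.one_lt_card] at hle
    exact hle.not_gt hlt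

theorem exists_evalEval_eq_zero {f : F[X] → F[X]} (hf : IsPrimaryPseudopolynomial f)
    (hgrowth : ∀ᶠ n in atTop, ∀ A, A.natDegree ≤ n →
      27 * Fintype.card F * n * (f A).natDegree ≤ Fintype.card F ^ n) :
    ∃ Q : F[X][X][Y], Q ≠ 0 ∧ ∀ A, Q.evalEval A (f A) = 0 := by
  have hq : 2 ≤ Fintype.card F := Fintype.one_lt_card
  obtain ⟨n, hn, hqn, hf_le⟩ := ((eventually_ge_atTop 1).and
    ((eventually_mul_le_pow hq 12).and (eventually_forall_ge_atTop.2 hgrowth))).exists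
  obtain ⟨H, I, hH, hI, hvol⟩ := exists_box_volume_gt hq hn hqn
  have hbox : ∀ m ≥ n, ∀ A, A.natDegree ≤ m →
      H + I * A.natDegree + 9 * Fintype.card F * n * (f A).natDegree ≤ Fintype.card F ^ m :=
    fun m hm A hA ↦ box_degree_le_pow hq hn hm hH hI hA (hf_le m hm A hA)
  let x : (Fin n → F) → F[X] := fun v ↦ (degreeLTEquiv F n).symm v
  have hx : ∀ v, (x v).degree < (n : WithBot ℕ) :=
    fun v ↦ mem_degreeLT.1 ((degreeLTEquiv F n).symm v).2
  obtain ⟨w, hw, hzero⟩ := exists_boxPolynomial_evalEval_eq_zero x (fun v ↦ f (x v))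
    (by simpa using hvol) fun v ↦ hbox n le_rfl (x v) (natDegree_le_of_degree_le (hx v).le)
  have hHpos : 0 < H := Nat.pos_of_ne_zero fun h ↦ by simp [h] at hvol
  refine ⟨boxPolynomial w, boxPolynomial_ne_zero hw,
    (hf.evalEval _).eq_zero_of_degree_lt (by omega) (fun A hA ↦ ?_) fun m hm A hA ↦
      (natDegree_evalEval_boxPolynomial_lt hHpos w A (f A)).trans_le (hbox m hm A hA)⟩
  simpa [x] using hzero (degreeLTEquiv F n ⟨A, mem_degreeLT.2 hA⟩)

end FiniteField

section Field

variable {F : Type*} [Field F] {h : F[X] → F[X]}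

theorem sub_dvd_mul_derivative (hh : IsPrimaryPseudopolynomial h) (A B : F[X]) :
    A - B ∣ (h A - h B) * derivative (A - B) :=
  dvd_mul_derivative_of_forall_irreducible_dvd fun _ hP hdvd ↦ hh hP hdvd

theorem exists_forall_natDegree_ge_eq_zero (hh : IsPrimaryPseudopolynomial h) {c : ℕ}
    (hgrowth : HasLinearGrowth c h) {s : Finset F[X]} (hs : c < s.card) (hzero : ∀ a ∈ s, h a = 0)
    {T : F[X]} (hT : ∀ a ∈ s, derivative a ≠ T) :
    ∃ N, ∀ A, derivative A = T → N ≤ A.natDegree → h A = 0 := by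
  obtain ⟨K, hK⟩ := hgrowth
  obtain ⟨E, hE, hprod⟩ := exists_forall_prod_sub_dvd_mul s
  set W := ∏ a ∈ s, (T - derivative a)
  have hW : W ≠ 0 := Finset.prod_ne_zero_iff.2 fun a ha ↦ sub_ne_zero.2 (hT a ha).symm
  refine ⟨s.sup natDegree + K + W.natDegree + E.natDegree + 1, fun A hA hN ↦ ?_⟩
  have hdvd : ∏ a ∈ s, (A - a) ∣ h A * W * E := by
    refine hprod A _ fun a ha ↦ ?_
    have hMason := hh.sub_dvd_mul_derivative A a
    rw [hzero a ha, sub_zero, derivative_sub, hA] at hMason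
    exact hMason.trans (mul_dvd_mul_left _ (Finset.dvd_prod_of_mem _ ha))
  by_contra hne
  have hle := natDegree_le_of_dvd hdvd (mul_ne_zero (mul_ne_zero hne hW) hE)
  rw [natDegree_prod_sub fun a ha ↦ (Finset.le_sup ha).trans_lt (by omega),
    natDegree_mul (mul_ne_zero hne hW) hE, natDegree_mul hne hW] at hle
  have hcard : c * A.natDegree + A.natDegree ≤ s.card * A.natDegree := by
    rw [← Nat.succ_mul]
    exact Nat.mul_le_mul_right _ hs
  have := hK A
  omega

theorem eq_zero_of_natDegree_lt (hh : IsPrimaryPseudopolynomial h) {A B : F[X]} (hA : h A = 0)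
    (hder : derivative B ≠ derivative A)
    (hdeg : (h B).natDegree + (derivative (A - B)).natDegree < (A - B).natDegree) : h B = 0 := by
  by_contra hB
  have hder' : derivative (A - B) ≠ 0 := by
    rw [derivative_sub]
    exact sub_ne_zero.2 hder.symm
  have hdvd := hh.sub_dvd_mul_derivative A B
  rw [hA, zero_sub, neg_mul, dvd_neg] at hdvd
  have hle := natDegree_le_of_dvd hdvd (mul_ne_zero hB hder')
  rw [natDegree_mul hB hder'] at hle
  exact hle.not_gt hdeg

end Field

end IsPrimaryPseudopolynomial

section PositiveCharacteristic

theorem exists_derivative_eq_of_natDegree_ge {R : Type*} [CommSemiring R] [Nontrivial R] (p : ℕ)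
    [NeZero p] [CharP R p] (s : Finset R[X]) :
    ∃ T, (∀ a ∈ s, derivative a ≠ T) ∧ ∀ N, ∃ A, derivative A = T ∧ N ≤ A.natDegree := by
  classical
  have hp : p ≠ 0 := NeZero.ne p
  have hinj : Function.Injective fun k : ℕ ↦ (X ^ (p * k) : R[X]) := fun k l hkl ↦
    Nat.eq_of_mul_eq_mul_left (Nat.pos_of_ne_zero hp) (by simpa using congrArg natDegree hkl)
  obtain ⟨_, ⟨k, rfl⟩, hk⟩ :=
    (Set.infinite_range_of_injective hinj).exists_notMem_finset (s.image derivative)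
  -- The `p`-th power `X ^ (p * (N + k + 2))` raises the degree without changing the derivative.
  refine ⟨X ^ (p * k), fun a ha h ↦ hk (Finset.mem_image.2 ⟨a, ha, h⟩), fun N ↦
    ⟨X ^ (p * (N + k + 2)) + X ^ (p * k + 1), by simp [derivative_X_pow], ?_⟩⟩
  have hlt : p * k + 1 < p * (N + k + 2) := by nlinarith [Nat.pos_of_ne_zero hp]
  rw [natDegree_add_eq_left_of_natDegree_lt (by simpa using hlt), natDegree_X_pow]
  nlinarith [Nat.pos_of_ne_zero hp]

namespace IsPrimaryPseudopolynomial

variable {F : Type*} [Field F]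

theorem eq_zero_of_hasLinearGrowth (p : ℕ) [NeZero p] [CharP F p] {h : F[X] → F[X]}
    (hh : IsPrimaryPseudopolynomial h) {c : ℕ} (hgrowth : HasLinearGrowth c h)
    {s : Finset F[X]} (hs : c < s.card) (hzero : ∀ a ∈ s, h a = 0) (B : F[X]) : h B = 0 := by
  classical
  obtain ⟨T, hT, hlarge⟩ := exists_derivative_eq_of_natDegree_ge p (insert B s)
  rw [Finset.forall_mem_insert] at hT
  obtain ⟨N, hN⟩ := hh.exists_forall_natDegree_ge_eq_zero hgrowth hs hzero hT.2
  obtain ⟨A, hA, hdeg⟩ :=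
    hlarge (N + B.natDegree + (h B).natDegree + (T - derivative B).natDegree + 1)
  refine hh.eq_zero_of_natDegree_lt (hN A hA (by omega)) (hA ▸ hT.1) ?_
  rw [natDegree_sub_eq_left_of_natDegree_lt (by omega), derivative_sub, hA]
  omega

theorem exists_eval_eq_of_hasLinearGrowth (p : ℕ) [NeZero p] [CharP F p] {f : F[X] → F[X]}
    (hf : IsPrimaryPseudopolynomial f) {c : ℕ} (hgrowth : HasLinearGrowth c f) :
    ∃ V ≠ 0, ∃ g : F[X][Y], ∀ A, g.eval A = V * f A := by
  obtain ⟨s, hs⟩ := Infinite.exists_subset_card_eq F[X] (c + 1)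
  obtain ⟨V, hV, g, hg, hgs⟩ := exists_natDegree_le_eval_eq_mul hs f
  have hdiff : IsPrimaryPseudopolynomial fun A ↦ V * f A - g.eval A := by
    have heval : ∀ A, V * f A - g.eval A = (C (C V) * Y - C g : F[X][X][Y]).evalEval A (f A) :=
      fun A ↦ by simp only [evalEval_sub, evalEval_mul, evalEval_X, evalEval_C, eval_C]
    simp only [heval]
    exact hf.evalEval _
  refine ⟨V, hV, g, fun A ↦ (sub_eq_zero.1 (hdiff.eq_zero_of_hasLinearGrowth p
    ((hgrowth.const_mul V).sub (hasLinearGrowth_eval hg)) (s := s) (by omega) ?_ A)).symm⟩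
  exact fun a ha ↦ sub_eq_zero.2 (hgs a ha).symm

end IsPrimaryPseudopolynomial

end PositiveCharacteristic

/-- **Theorem (main result).** Let `𝔽` be the finite field of order `q`, `𝒜 = 𝔽[t]`,
`𝒦 = 𝔽(t)`. If `f : 𝒜 → 𝒜` satisfies `f(A + B·P) ≡ f(A) mod P` for all `A, B ∈ 𝒜` and
irreducible `P`, and `deg(f(A)) < q^{deg A} / (27 q deg A)` for all `A` of sufficiently
large degree, then `f` is a polynomial map, i.e. given by an element of `𝒦[X]`. -/
theorem ruzsa_polynomial_main {F : Type*} [Field F] [Fintype F]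
    (q : ℕ) (hq : q = Fintype.card F)
    (f : F[X] → F[X])
    (hcong : ∀ A B P : F[X], Irreducible P → P ∣ f (A + B * P) - f A)
    (hdeg : ∃ N : ℕ, ∀ A : F[X], N ≤ A.natDegree →
      ((f A).natDegree : ℝ) < (q : ℝ) ^ A.natDegree / (27 * (q : ℝ) * (A.natDegree : ℝ))) :
    ∃ G : Polynomial (RatFunc F), ∀ A : F[X],
      Polynomial.eval (algebraMap F[X] (RatFunc F) A) G = algebraMap F[X] (RatFunc F) (f A) := by
  subst hq
  obtain ⟨N, hN⟩ := hdeg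
  have hf : IsPrimaryPseudopolynomial f := by
    rintro P hP A B ⟨D, hD⟩
    simpa [← sub_eq_iff_eq_add'.1 hD, mul_comm] using hcong B D P hP
  have hN' : ∀ A, N + 1 ≤ A.natDegree →
      27 * Fintype.card F * A.natDegree * (f A).natDegree ≤ Fintype.card F ^ A.natDegree := by
    intro A hA
    have hpos : (0 : ℝ) < 27 * Fintype.card F * A.natDegree := by
      have : 0 < A.natDegree := by omega
      positivity
    have hlt := (lt_div_iff₀' hpos).1 (hN A (by omega))
    exact_mod_cast hlt.le
  obtain ⟨Q, hQ, hroot⟩ := hf.exists_evalEval_eq_zero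
    (eventually_forall_mul_natDegree_le_pow Fintype.one_lt_card hN')
  obtain ⟨c, hc⟩ := exists_hasLinearGrowth_of_evalEval_eq_zero hQ hroot
  obtain ⟨p, hp⟩ := CharP.exists F
  have : NeZero p := ⟨CharP.char_ne_zero_of_finite F p⟩
  obtain ⟨V, hV, g, hg⟩ := hf.exists_eval_eq_of_hasLinearGrowth p hc
  exact exists_eval_algebraMap_eq (RatFunc F) hV hg
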